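/- Let w, w' ∈ W^J. If there exist v' ∈ (W_J ·_δ w')_min and v ∈ (W_J ·_δ w)_min with v ≤ v', then for every v' ∈ (W_J ·_δ w')_min there exists v ∈ (W_J ·_δ w)_min with v ≤ v'. (That is, in the definition of w ≤_{J,δ} w', the conditions 'for some v' ∈ (W_J ·_δ w')_min' and 'for every v' ∈ (W_J ·_δ w')_min' are equivalent.) -/

import Mathlib

open CoxeterSystem

variable {B : Type*} [Finite B] {W : Type*} [Group W] {M : CoxeterMatrix B}

namespace PartialConjugation

/-- The standard parabolic subgroup `W_J` of `W`, generated by the simple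
reflections indexed by `J`. -/
def parab (cs : CoxeterSystem M W) (J : Set B) : Subgroup W :=
  Subgroup.closure (cs.simple '' J)

/-- The simple reflection `s_j` (for `j ∈ J`), viewed as an element of `W_J`. -/
def sJ (cs : CoxeterSystem M W) (J : Set B) (j : B) (hj : j ∈ J) : parab cs J :=
  ⟨cs.simple j, Subgroup.subset_closure ⟨j, hj, rfl⟩⟩

/-- `w ∈ W^J`: `w` is a minimal length representative of its left coset `w W_J`. -/
def IsMinRep (cs : CoxeterSystem M W) (J : Set B) (w : W) : Prop :=
  ∀ v ∈ parab cs J, cs.length w ≤ cs.length (w * v)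

variable (cs : CoxeterSystem M W) (J J' : Set B) (δ : parab cs J ≃* parab cs J')

/-- `δ` carries the set of simple reflections indexed by `J` onto the set of
simple reflections indexed by `J'`. -/
def MapsSimples : Prop :=
  (∀ j, ∀ hj : j ∈ J, ∃ j' ∈ J', (δ (sJ cs J j hj) : W) = cs.simple j') ∧
  (∀ j' ∈ J', ∃ j, ∃ hj : j ∈ J, (δ (sJ cs J j hj) : W) = cs.simple j')

/-- `K` is a `w`-special subset of `J`. -/
def WSpecial (w : W) (K : Set B) : Prop :=
  K ⊆ J ∧ ∀ k ∈ K, ∃ j, ∃ hjJ : j ∈ J, j ∈ K ∧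
    w * cs.simple k * w⁻¹ = (δ (sJ cs J j hjJ) : W)

/-- The set `I(J, w, δ)`: the union of all `w`-special subsets of `J`. -/
def Iset (w : W) : Set B := ⋃₀ {K | WSpecial cs J J' δ w K}

/-- The set `W_J ·_δ V = {δ(u) v u⁻¹ : u ∈ W_J, v ∈ V}`. -/
def orbSet (V : Set W) : Set W :=
  {x | ∃ u : parab cs J, ∃ v ∈ V, x = (δ u : W) * v * (u : W)⁻¹}

/-- The orbit of `x` under the `δ`-twisted partial conjugation action of `W_J`. -/
def orbitOf (x : W) : Set W := orbSet cs J J' δ {x}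

/-- The coset `w W_{I(J,w,δ)}`. -/
def coset (w : W) : Set W :=
  {x | ∃ v ∈ parab cs (Iset cs J J' δ w), x = w * v}

/-- Elementary step `v →_i v'` of `δ`-twisted conjugation: `v' = δ(s_i) v s_i`
with `i ∈ J` and `ℓ(v') ≤ ℓ(v)`. -/
def StepRel (v v' : W) : Prop :=
  ∃ i, ∃ hi : i ∈ J, v' = (δ (sJ cs J i hi) : W) * v * cs.simple i ∧
    cs.length v' ≤ cs.length v

/-- The relation `v →_{J,δ} v'`. -/
def ToRel : W → W → Prop := Relation.ReflTransGen (StepRel cs J J' δ)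

/-- The relation `v ≈_{J,δ} v'`. -/
def Approx (v v' : W) : Prop := ToRel cs J J' δ v v' ∧ ToRel cs J J' δ v' v

/-- The Bruhat order on `W`. -/
def bruhatLE (cs : CoxeterSystem M W) : W → W → Prop :=
  Relation.ReflTransGen
    (fun a b => ∃ t, cs.IsReflection t ∧ b = a * t ∧ cs.length a < cs.length b)

/-- The set of minimal length elements in the orbit of `x`. -/
def orbMin (x : W) : Set W :=
  {y ∈ orbitOf cs J J' δ x | ∀ z ∈ orbitOf cs J J' δ x, cs.length y ≤ cs.length z}


section Cocycle

open Classical in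
/-- Generators of the permutation representation on `W × ZMod 2`. -/
noncomputable def fGen (cs : CoxeterSystem M W) (i : B) : Function.End (W × ZMod 2) :=
  fun p => (cs.simple i * p.1 * cs.simple i, p.2 + if p.1 = cs.simple i then 1 else 0)

theorem simple_mul_pow_conj (cs : CoxeterSystem M W) (i j : B) (l : ℕ) :
    ((cs.simple i * cs.simple j) ^ l)⁻¹ * cs.simple j =
      cs.simple j * (cs.simple i * cs.simple j) ^ l := by
  induction l with
  | zero => simp
  | succ l ih =>
    rw [pow_succ (n := l), mul_inv_rev, mul_assoc, ih, ← pow_succ, pow_succ']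
    rw [← mul_assoc, ← mul_assoc, ← mul_assoc]
    simp

theorem conj_eq_iff' (x t y : W) : x * t * x⁻¹ = y ↔ t = x⁻¹ * y * x := by
  constructor
  · rintro rfl; group
  · rintro rfl; group

open Classical in
theorem fGen_pow (cs : CoxeterSystem M W) (i j : B) (k : ℕ) (t : W) (e : ZMod 2) :
    ((fGen cs i * fGen cs j) ^ k) (t, e) =
      ((cs.simple i * cs.simple j) ^ k * t * ((cs.simple i * cs.simple j) ^ k)⁻¹,
        e + ∑ n ∈ Finset.range (2 * k),
          if t = cs.simple j * (cs.simple i * cs.simple j) ^ n then 1 else 0) := by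
  induction k with
  | zero => simp; rfl
  | succ k ih =>
    rw [pow_succ']
    change fGen cs i (fGen cs j (((fGen cs i * fGen cs j) ^ k) (t, e))) = _
    rw [ih]
    have h1 : ((cs.simple i * cs.simple j) ^ k * t * ((cs.simple i * cs.simple j) ^ k)⁻¹
        = cs.simple j) ↔ t = cs.simple j * (cs.simple i * cs.simple j) ^ (2 * k) := by
      rw [conj_eq_iff', simple_mul_pow_conj, mul_assoc, ← pow_add, two_mul]
    have h2 : (cs.simple j * ((cs.simple i * cs.simple j) ^ k * t *
          ((cs.simple i * cs.simple j) ^ k)⁻¹) * cs.simple j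
        = cs.simple i) ↔ t = cs.simple j * (cs.simple i * cs.simple j) ^ (2 * k + 1) := by
      have e0 : cs.simple j * ((cs.simple i * cs.simple j) ^ k * t *
          ((cs.simple i * cs.simple j) ^ k)⁻¹) * cs.simple j =
          (cs.simple j * (cs.simple i * cs.simple j) ^ k) * t *
            (cs.simple j * (cs.simple i * cs.simple j) ^ k)⁻¹ := by
        rw [mul_inv_rev, cs.inv_simple]; simp only [mul_assoc]
      have e1 : 2 * k + 1 = k + (1 + k) := by ring
      rw [e0, conj_eq_iff', mul_inv_rev, cs.inv_simple, simple_mul_pow_conj, e1, pow_add,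
        pow_add _ 1, pow_one]
      simp only [mul_assoc]
    simp only [fGen, h1, h2]
    rw [show 2 * (k + 1) = 2 * k + 1 + 1 by ring, Finset.sum_range_succ, Finset.sum_range_succ]
    ext
    · simp only [pow_succ', mul_inv_rev, cs.inv_simple]; group
    · simp only; ring

theorem fGen_liftable (cs : CoxeterSystem M W) : M.IsLiftable (fGen cs) := by
  classical
  intro i j
  funext ⟨t, e⟩
  rw [fGen_pow]
  simp only [cs.simple_mul_simple_pow, two_mul, Finset.sum_range_add, pow_add, one_mul,
    inv_one, mul_one, CharTwo.add_self_eq_zero, add_zero]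
  rfl

/-- The permutation representation. -/
noncomputable def rep (cs : CoxeterSystem M W) : W →* Function.End (W × ZMod 2) :=
  cs.lift ⟨fGen cs, fGen_liftable cs⟩

theorem rep_simple (cs : CoxeterSystem M W) (i : B) : rep cs (cs.simple i) = fGen cs i :=
  cs.lift_apply_simple _ i

/-- The cocycle: parity of the number of occurrences of `t` in the inversion sequence. -/
noncomputable def eta (cs : CoxeterSystem M W) (w t : W) : ZMod 2 := (rep cs w (t, 0)).2

theorem rep_apply (cs : CoxeterSystem M W) (w t : W) (e : ZMod 2) :
    rep cs w (t, e) = (w * t * w⁻¹, e + eta cs w t) := by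
  induction w using cs.simple_induction_left generalizing t e with
  | one =>
    have h : ∀ e, rep cs 1 (t, e) = (t, e) := by intro e; rw [map_one]; rfl
    simp [eta, h]
  | mul_simple_left w i ih =>
    have h : ∀ e, rep cs (cs.simple i * w) (t, e) = fGen cs i (rep cs w (t, e)) := by
      intro e; rw [map_mul, rep_simple]; rfl
    unfold eta
    rw [h, h, ih, ih]
    simp only [fGen]
    ext
    · simp [mul_assoc]
    · simp [add_assoc]

theorem eta_mul (cs : CoxeterSystem M W) (x y t : W) :
    eta cs (x * y) t = eta cs y t + eta cs x (y * t * y⁻¹) := by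
  have h : rep cs (x * y) (t, 0) = rep cs x (rep cs y (t, 0)) := by rw [map_mul]; rfl
  rw [rep_apply, rep_apply cs y, rep_apply] at h
  simpa using congrArg Prod.snd h

open Classical in
theorem eta_simple (cs : CoxeterSystem M W) (i : B) (t : W) :
    eta cs (cs.simple i) t = if t = cs.simple i then 1 else 0 := by
  simp [eta, rep_simple, fGen]

theorem eta_one (cs : CoxeterSystem M W) (t : W) : eta cs 1 t = 0 := by
  simp [eta]; rfl

theorem eta_self (cs : CoxeterSystem M W) {t : W} (ht : cs.IsReflection t) :
    eta cs t t = 1 := by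
  classical
  obtain ⟨w, i, rfl⟩ := ht
  have h := eta_mul cs w w⁻¹ (w * cs.simple i * w⁻¹)
  rw [mul_inv_cancel, eta_one] at h
  have e1 : w⁻¹ * (w * cs.simple i * w⁻¹) * w⁻¹⁻¹ = cs.simple i := by group
  rw [e1] at h
  rw [eta_mul, eta_mul, e1, eta_simple, if_pos rfl, cs.inv_simple]
  simp only [cs.simple_mul_simple_cancel_right]
  linear_combination -h

theorem mem_ris_of_eta (cs : CoxeterSystem M W) (ω : List B) (t : W)
    (h : eta cs (cs.wordProd ω) t ≠ 0) : t ∈ cs.rightInvSeq ω := by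
  classical
  induction ω with
  | nil => simp [eta_one] at h
  | cons i ω ih =>
    rw [cs.wordProd_cons, eta_mul, eta_simple] at h
    rw [rightInvSeq, List.mem_cons]
    by_cases hi : cs.wordProd ω * t * (cs.wordProd ω)⁻¹ = cs.simple i
    · left; rw [← hi]; group
    · right; apply ih; simpa [hi] using h

theorem lt_of_eta (cs : CoxeterSystem M W) (w t : W) (h : eta cs w t ≠ 0) :
    cs.length (w * t) < cs.length w := by
  obtain ⟨ω, hω, rfl⟩ := cs.exists_isReduced w
  exact (cs.isRightInversion_of_mem_rightInvSeq hω (mem_ris_of_eta cs ω t h)).2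

theorem eta_ne_zero_iff (cs : CoxeterSystem M W) (w : W) {t : W} (ht : cs.IsReflection t) :
    eta cs w t ≠ 0 ↔ cs.length (w * t) < cs.length w := by
  refine ⟨lt_of_eta cs w t, fun h h0 => ?_⟩
  have h1 : eta cs (w * t) t ≠ 0 := by
    rw [eta_mul, eta_self cs ht, ht.inv, mul_assoc, ht.mul_self, mul_one, h0]; decide
  have := lt_of_eta cs _ _ h1
  rw [mul_assoc, ht.mul_self, mul_one] at this
  omega

/-- Strong exchange. -/
theorem strong_exchange (cs : CoxeterSystem M W) (ω : List B) {t : W} (ht : cs.IsReflection t)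
    (h : cs.length (cs.wordProd ω * t) < cs.length (cs.wordProd ω)) :
    ∃ j < ω.length, cs.wordProd ω * t = cs.wordProd (ω.eraseIdx j) := by
  have := mem_ris_of_eta cs ω t ((eta_ne_zero_iff cs _ ht).2 h)
  obtain ⟨j, hj, rfl⟩ := List.mem_iff_getElem.mp this
  refine ⟨j, by simpa using hj, ?_⟩
  rw [← List.getD_eq_getElem _ 1 hj, cs.wordProd_mul_getD_rightInvSeq]

/-- Key fact: right multiplication by `s` preserves Bruhat edges `x, xt` for `t ≠ s`. -/
theorem key (cs : CoxeterSystem M W) (x : W) (i : B) {t : W} (ht : cs.IsReflection t)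
    (hne : t ≠ cs.simple i) :
    cs.length x < cs.length (x * t) ↔
      cs.length (x * cs.simple i) < cs.length (x * t * cs.simple i) := by
  classical
  have ht' := ht.conj (cs.simple i)
  rw [cs.inv_simple] at ht'
  have e1 := eta_ne_zero_iff cs x ht
  have e2 := eta_ne_zero_iff cs (x * cs.simple i) ht'
  have hx : x * cs.simple i * (cs.simple i * t * cs.simple i) = x * t * cs.simple i := by
    simp [← mul_assoc]
  have n1 := ht.length_mul_left_ne x
  have n2 := ht'.length_mul_left_ne (x * cs.simple i)
  rw [hx] at e2 n2
  have hne' : cs.simple i * t * cs.simple i ≠ cs.simple i := by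
    intro h; apply hne
    have := congrArg (fun z => cs.simple i * z * cs.simple i) h
    simpa [← mul_assoc] using this
  have e3 : eta cs (x * cs.simple i) (cs.simple i * t * cs.simple i) = eta cs x t := by
    rw [eta_mul, eta_simple, if_neg hne', cs.inv_simple]
    simp [← mul_assoc]
  rw [e3, e1] at e2
  omega

end Cocycle

section Bruhat

theorem bruhat_mul_simple (cs : CoxeterSystem M W) (x : W) (i : B)
    (h : cs.length x < cs.length (x * cs.simple i)) : bruhatLE cs x (x * cs.simple i) :=
  Relation.ReflTransGen.single ⟨cs.simple i, cs.isReflection_simple i, rfl, h⟩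

theorem bruhat_inv (cs : CoxeterSystem M W) {x y : W} (h : bruhatLE cs x y) :
    bruhatLE cs x⁻¹ y⁻¹ := by
  induction h with
  | refl => exact Relation.ReflTransGen.refl
  | @tail b c _ hbc ih =>
    obtain ⟨t, ht, rfl, hl⟩ := hbc
    refine ih.tail ⟨_, ht.conj b, ?_, ?_⟩
    · rw [mul_inv_rev, ht.inv]; group
    · rw [cs.length_inv, cs.length_inv]; exact hl

theorem bruhat_simple_mul (cs : CoxeterSystem M W) (x : W) (i : B)
    (h : cs.length x < cs.length (cs.simple i * x)) : bruhatLE cs x (cs.simple i * x) := by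
  have h1 : (x⁻¹ * cs.simple i)⁻¹ = cs.simple i * x := by simp
  have := bruhat_inv cs (bruhat_mul_simple cs x⁻¹ i (by
    rw [cs.length_inv, ← cs.length_inv (x⁻¹ * _), h1]; exact h))
  rwa [inv_inv, h1] at this

open Classical in
/-- The shorter of `x`, `x s`. -/
noncomputable def lo (cs : CoxeterSystem M W) (i : B) (x : W) : W :=
  if cs.length (x * cs.simple i) < cs.length x then x * cs.simple i else x

open Classical in
/-- The longer of `x`, `x s`. -/
noncomputable def hi (cs : CoxeterSystem M W) (i : B) (x : W) : W :=
  if cs.length (x * cs.simple i) < cs.length x then x else x * cs.simple i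

theorem lo_le (cs : CoxeterSystem M W) (i : B) (x : W) :
    bruhatLE cs (lo cs i x) x ∧ bruhatLE cs (lo cs i x) (x * cs.simple i) := by
  unfold lo
  split_ifs with h
  · refine ⟨?_, Relation.ReflTransGen.refl⟩
    have := bruhat_mul_simple cs (x * cs.simple i) i (by simpa using h)
    simpa using this
  · have := cs.length_mul_simple_ne x i
    exact ⟨Relation.ReflTransGen.refl, bruhat_mul_simple cs x i (by omega)⟩

theorem le_hi (cs : CoxeterSystem M W) (i : B) (x : W) :
    bruhatLE cs x (hi cs i x) ∧ bruhatLE cs (x * cs.simple i) (hi cs i x) := by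
  unfold hi
  split_ifs with h
  · refine ⟨Relation.ReflTransGen.refl, ?_⟩
    have := bruhat_mul_simple cs (x * cs.simple i) i (by simpa using h)
    simpa using this
  · have := cs.length_mul_simple_ne x i
    exact ⟨bruhat_mul_simple cs x i (by omega), Relation.ReflTransGen.refl⟩

theorem lo_cases (cs : CoxeterSystem M W) (i : B) (x : W) :
    lo cs i x = x ∨ lo cs i x = x * cs.simple i := by
  unfold lo; split_ifs <;> simp

theorem hi_cases (cs : CoxeterSystem M W) (i : B) (x : W) :
    hi cs i x = x ∨ hi cs i x = x * cs.simple i := by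
  unfold hi; split_ifs <;> simp

theorem lo_mul (cs : CoxeterSystem M W) (i : B) (x : W) :
    lo cs i (x * cs.simple i) = lo cs i x := by
  have := cs.length_mul_simple_ne x i
  unfold lo; simp only [cs.simple_mul_simple_cancel_right]
  split_ifs <;> first | rfl | omega

theorem hi_mul (cs : CoxeterSystem M W) (i : B) (x : W) :
    hi cs i (x * cs.simple i) = hi cs i x := by
  have := cs.length_mul_simple_ne x i
  unfold hi; simp only [cs.simple_mul_simple_cancel_right]
  split_ifs <;> first | rfl | omega

theorem lift_lohi (cs : CoxeterSystem M W) (i : B) {x y : W} (h : bruhatLE cs x y) :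
    bruhatLE cs (lo cs i x) (lo cs i y) ∧ bruhatLE cs (hi cs i x) (hi cs i y) := by
  induction h with
  | refl => exact ⟨Relation.ReflTransGen.refl, Relation.ReflTransGen.refl⟩
  | @tail b c _ hbc ih =>
    suffices bruhatLE cs (lo cs i b) (lo cs i c) ∧ bruhatLE cs (hi cs i b) (hi cs i c) from
      ⟨ih.1.trans this.1, ih.2.trans this.2⟩
    obtain ⟨t, ht, rfl, hl⟩ := hbc
    by_cases hti : t = cs.simple i
    · subst hti
      rw [lo_mul, hi_mul]
      exact ⟨Relation.ReflTransGen.refl, Relation.ReflTransGen.refl⟩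
    · have e1 : bruhatLE cs b (b * t) := Relation.ReflTransGen.single ⟨t, ht, rfl, hl⟩
      have e2 : bruhatLE cs (b * cs.simple i) (b * t * cs.simple i) := by
        refine Relation.ReflTransGen.single ⟨cs.simple i * t * (cs.simple i)⁻¹, ht.conj _, ?_,
          (key cs b i ht hti).1 hl⟩
        simp [← mul_assoc]
      constructor
      · rcases lo_cases cs i (b * t) with h | h <;> rw [h]
        · exact (lo_le cs i b).1.trans e1
        · exact (lo_le cs i b).2.trans e2
      · rcases hi_cases cs i b with h | h <;> rw [h]
        · exact e1.trans (le_hi cs i (b * t)).1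
        · exact e2.trans (le_hi cs i (b * t)).2

theorem lift_right (cs : CoxeterSystem M W) (i : B) {x y : W} (h : bruhatLE cs x y)
    (hy : cs.length (y * cs.simple i) < cs.length y) :
    (cs.length (x * cs.simple i) < cs.length x →
      bruhatLE cs (x * cs.simple i) (y * cs.simple i)) ∧
    (¬ cs.length (x * cs.simple i) < cs.length x → bruhatLE cs x (y * cs.simple i)) := by
  have := (lift_lohi cs i h).1
  unfold lo at this
  rw [if_pos hy] at this
  constructor <;> intro hx
  · rwa [if_pos hx] at this
  · rwa [if_neg hx] at this

theorem lift_right_up (cs : CoxeterSystem M W) (i : B) {x y : W} (h : bruhatLE cs x y)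
    (hy : cs.length y < cs.length (y * cs.simple i))
    (hx : cs.length x < cs.length (x * cs.simple i)) :
      bruhatLE cs (x * cs.simple i) (y * cs.simple i) := by
  have := (lift_lohi cs i h).2
  unfold hi at this
  rwa [if_neg (by omega), if_neg (by omega)] at this

theorem len_inv_simple (cs : CoxeterSystem M W) (i : B) (x : W) :
    cs.length (x⁻¹ * cs.simple i) = cs.length (cs.simple i * x) := by
  rw [← cs.length_inv]; simp

theorem lift_left (cs : CoxeterSystem M W) (i : B) {x y : W} (h : bruhatLE cs x y)
    (hy : cs.length (cs.simple i * y) < cs.length y) :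
    (cs.length (cs.simple i * x) < cs.length x →
      bruhatLE cs (cs.simple i * x) (cs.simple i * y)) ∧
    (¬ cs.length (cs.simple i * x) < cs.length x → bruhatLE cs x (cs.simple i * y)) := by
  have := lift_right cs i (bruhat_inv cs h) (by rwa [len_inv_simple, cs.length_inv])
  rw [len_inv_simple, cs.length_inv] at this
  refine ⟨fun hx => ?_, fun hx => ?_⟩
  · simpa using bruhat_inv cs (this.1 hx)
  · simpa using bruhat_inv cs (this.2 hx)

theorem lift_left_up (cs : CoxeterSystem M W) (i : B) {x y : W} (h : bruhatLE cs x y)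
    (hy : cs.length y < cs.length (cs.simple i * y))
    (hx : cs.length x < cs.length (cs.simple i * x)) :
      bruhatLE cs (cs.simple i * x) (cs.simple i * y) := by
  have := lift_right_up cs i (bruhat_inv cs h) (by rwa [len_inv_simple, cs.length_inv])
    (by rwa [len_inv_simple, cs.length_inv])
  simpa using bruhat_inv cs this

/-- If `x < x s`, and left multiplication by `t` moves length in the opposite direction
after multiplying by `s`, then `t x = x s`. -/
theorem simple_mul_eq (cs : CoxeterSystem M W) (x : W) (k i : B)
    (h : ¬ (cs.length x < cs.length (cs.simple k * x) ↔
      cs.length (x * cs.simple i) < cs.length (cs.simple k * x * cs.simple i))) :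
    cs.simple k * x = x * cs.simple i := by
  have ht : cs.IsReflection (x⁻¹ * cs.simple k * x) := by
    simpa using (cs.isReflection_simple k).conj x⁻¹
  have e : x * (x⁻¹ * cs.simple k * x) = cs.simple k * x := by group
  by_contra hne
  apply h
  have := key cs x i ht (by intro h'; apply hne; rw [← e, h'])
  rwa [e] at this

end Bruhat

section Parabolic

theorem simple_mem_parab (cs : CoxeterSystem M W) {J : Set B} {j : B} (hj : j ∈ J) :
    cs.simple j ∈ parab cs J := Subgroup.subset_closure ⟨j, hj, rfl⟩

theorem word_mem_parab (cs : CoxeterSystem M W) {J : Set B} {ω : List B} (h : ∀ i ∈ ω, i ∈ J) :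
    cs.wordProd ω ∈ parab cs J := by
  induction ω with
  | nil => simpa using (parab cs J).one_mem
  | cons i ω ih =>
    rw [cs.wordProd_cons]
    exact (parab cs J).mul_mem (simple_mem_parab cs (h i (by simp)))
      (ih (fun k hk => h k (by simp [hk])))

theorem parab_mono (cs : CoxeterSystem M W) {K J : Set B} (h : K ⊆ J) :
    parab cs K ≤ parab cs J := Subgroup.closure_mono (Set.image_mono h)

theorem exists_word (cs : CoxeterSystem M W) {J : Set B} {x : W} (h : x ∈ parab cs J) :
    ∃ ω : List B, (∀ i ∈ ω, i ∈ J) ∧ x = cs.wordProd ω := by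
  induction h using Subgroup.closure_induction with
  | mem x hx =>
    obtain ⟨j, hj, rfl⟩ := hx
    exact ⟨[j], by simpa using hj, by simp⟩
  | one => exact ⟨[], by simp, by simp⟩
  | mul x y _ _ hx hy =>
    obtain ⟨a, ha, rfl⟩ := hx
    obtain ⟨b, hb, rfl⟩ := hy
    refine ⟨a ++ b, ?_, (cs.wordProd_append _ _).symm⟩
    intro i hi
    rcases List.mem_append.1 hi with h | h
    exacts [ha i h, hb i h]
  | inv x _ hx =>
    obtain ⟨a, ha, rfl⟩ := hx
    exact ⟨a.reverse, by simpa using ha, by simp⟩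

/-- A shortest word among words with letters in `J`. -/
def JMin (cs : CoxeterSystem M W) (J : Set B) (ω : List B) : Prop :=
  (∀ i ∈ ω, i ∈ J) ∧
    ∀ ω' : List B, (∀ i ∈ ω', i ∈ J) → cs.wordProd ω' = cs.wordProd ω → ω.length ≤ ω'.length

theorem exists_JMin (cs : CoxeterSystem M W) {J : Set B} {x : W} (h : x ∈ parab cs J) :
    ∃ ω : List B, JMin cs J ω ∧ x = cs.wordProd ω := by
  classical
  have hex : ∃ n, ∃ ω : List B, (∀ i ∈ ω, i ∈ J) ∧ x = cs.wordProd ω ∧ ω.length = n := by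
    obtain ⟨ω, h1, h2⟩ := exists_word cs h
    exact ⟨_, ω, h1, h2, rfl⟩
  obtain ⟨ω, h1, h2, h3⟩ := Nat.find_spec hex
  refine ⟨ω, ⟨h1, fun ω' h4 h5 => ?_⟩, h2⟩
  rw [h3]
  exact Nat.find_min' hex ⟨ω', h4, by rw [h5, h2], rfl⟩

theorem len_add_word (cs : CoxeterSystem M W) {J : Set B} {a : W} (ha : IsMinRep cs J a)
    (ω : List B) (hω : JMin cs J ω) :
    cs.length (a * cs.wordProd ω) = cs.length a + ω.length := by
  induction ω using List.reverseRecOn with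
  | nil => simp
  | append_singleton ω s ih =>
    have hJ : ∀ i ∈ ω, i ∈ J := fun i hi => hω.1 i (by simp [hi])
    have hs : s ∈ J := hω.1 s (by simp)
    have hm : JMin cs J ω := by
      refine ⟨hJ, fun ω' h1 h2 => ?_⟩
      have := hω.2 (ω' ++ [s]) (by
        intro i hi
        rcases List.mem_append.1 hi with h | h
        · exact h1 i h
        · simp at h; rwa [h]) (by rw [cs.wordProd_append, cs.wordProd_append, h2])
      simpa using this
    have ih := ih hm
    rw [cs.wordProd_append, cs.wordProd_singleton, ← mul_assoc, List.length_append]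
    rcases cs.length_mul_simple (a * cs.wordProd ω) s with h | h
    · simp [h, ih, add_assoc]
    · exfalso
      obtain ⟨α, hα, rfl⟩ := cs.exists_isReduced a
      have hlt : cs.length (cs.wordProd (α ++ ω) * cs.simple s) <
          cs.length (cs.wordProd (α ++ ω)) := by
        rw [cs.wordProd_append]; omega
      obtain ⟨j, hj, hj2⟩ := strong_exchange cs (α ++ ω) (cs.isReflection_simple s) hlt
      rw [cs.wordProd_append] at hj2
      by_cases hja : j < α.length
      · rw [List.eraseIdx_append_of_lt_length hja, cs.wordProd_append] at hj2
        have e : cs.wordProd (α.eraseIdx j) =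
            cs.wordProd α * (cs.wordProd ω * cs.simple s * (cs.wordProd ω)⁻¹) := by
          rw [eq_comm, ← mul_assoc, ← mul_assoc, hj2]; group
        have h1 := ha (cs.wordProd ω * cs.simple s * (cs.wordProd ω)⁻¹)
          (Subgroup.mul_mem _ (Subgroup.mul_mem _ (word_mem_parab cs hJ)
            (simple_mem_parab cs hs)) (Subgroup.inv_mem _ (word_mem_parab cs hJ)))
        rw [← e] at h1
        have h2 := cs.length_wordProd_le (α.eraseIdx j)
        have h3 := List.length_eraseIdx_add_one hja
        have h4 : cs.length (cs.wordProd α) = α.length := hα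
        omega
      · rw [List.eraseIdx_append_of_length_le (by omega), cs.wordProd_append, mul_assoc] at hj2
        have hj3 := mul_left_cancel hj2
        have h1 := hω.2 (ω.eraseIdx (j - α.length))
          (fun i hi => hJ i (List.mem_of_mem_eraseIdx hi))
          (by rw [← hj3, cs.wordProd_append, cs.wordProd_singleton])
        rw [List.length_append] at hj
        have h3 := List.length_eraseIdx_add_one (l := ω) (i := j - α.length) (by omega)
        simp at h1
        omega

theorem isMinRep_one (cs : CoxeterSystem M W) (J : Set B) : IsMinRep cs J 1 := by
  intro v _; simp

theorem exists_reduced (cs : CoxeterSystem M W) {J : Set B} {x : W} (h : x ∈ parab cs J) :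
    ∃ ω : List B, JMin cs J ω ∧ x = cs.wordProd ω ∧ cs.length x = ω.length := by
  obtain ⟨ω, h1, rfl⟩ := exists_JMin cs h
  refine ⟨ω, h1, rfl, ?_⟩
  simpa using len_add_word cs (isMinRep_one cs J) ω h1

theorem len_add (cs : CoxeterSystem M W) {J : Set B} {a x : W} (ha : IsMinRep cs J a)
    (h : x ∈ parab cs J) : cs.length (a * x) = cs.length a + cs.length x := by
  obtain ⟨ω, h1, rfl, h2⟩ := exists_reduced cs h
  rw [h2, len_add_word cs ha ω h1]

theorem exists_decomp (cs : CoxeterSystem M W) (J : Set B) (v : W) :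
    ∃ a x, IsMinRep cs J a ∧ x ∈ parab cs J ∧ v = a * x := by
  classical
  have hex : ∃ n, ∃ x ∈ parab cs J, cs.length (v * x) = n := ⟨_, 1, Subgroup.one_mem _, rfl⟩
  obtain ⟨x, hx, hn⟩ := Nat.find_spec hex
  refine ⟨v * x, x⁻¹, ?_, Subgroup.inv_mem _ hx, by group⟩
  intro y hy
  rw [hn]
  exact Nat.find_min' hex ⟨x * y, Subgroup.mul_mem _ hx hy, by rw [mul_assoc]⟩

theorem isMinRep_of_local (cs : CoxeterSystem M W) {J : Set B} {b : W}
    (h : ∀ j ∈ J, cs.length b < cs.length (b * cs.simple j)) : IsMinRep cs J b := by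
  obtain ⟨a, x, ha, hx, rfl⟩ := exists_decomp cs J b
  obtain ⟨ω, h1, rfl, h2⟩ := exists_reduced cs hx
  rcases List.eq_nil_or_concat ω with rfl | ⟨ω', s, rfl⟩
  · simpa using ha
  · exfalso
    have hs : s ∈ J := h1.1 s (by simp)
    have hJ : ∀ i ∈ ω', i ∈ J := fun i hi => h1.1 i (by simp [hi])
    have h3 := h s hs
    rw [len_add cs ha hx, h2, cs.wordProd_concat, mul_assoc,
      cs.simple_mul_simple_cancel_right,
      len_add cs ha (word_mem_parab cs hJ)] at h3
    have := cs.length_wordProd_le ω'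
    simp at h3
    omega

theorem deodhar (cs : CoxeterSystem M W) {J : Set B} {a : W} (ha : IsMinRep cs J a) (i : B) :
    IsMinRep cs J (cs.simple i * a) ∨ ∃ j ∈ J, cs.simple i * a = a * cs.simple j := by
  by_cases h : ∃ j ∈ J, cs.length (cs.simple i * a * cs.simple j) < cs.length (cs.simple i * a)
  · right
    obtain ⟨j, hj, hlt⟩ := h
    refine ⟨j, hj, simple_mul_eq cs a i j ?_⟩
    have h1 := ha (cs.simple j) (simple_mem_parab cs hj)
    have h2 := cs.length_mul_simple a j
    have h3 := cs.length_simple_mul a i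
    have h4 := cs.length_mul_simple (cs.simple i * a) j
    have h5 := cs.length_simple_mul (a * cs.simple j) i
    rw [← mul_assoc] at h5
    omega
  · left
    push Not at h
    apply isMinRep_of_local
    intro j hj
    have h1 := h j hj
    have h2 := cs.length_mul_simple_ne (cs.simple i * a) j
    omega

theorem decomp_unique (cs : CoxeterSystem M W) {J : Set B} {a b x z : W}
    (ha : IsMinRep cs J a) (hb : IsMinRep cs J b) (hx : x ∈ parab cs J) (hz : z ∈ parab cs J)
    (h : b * z = a * x) : b = a ∧ z = x := by
  have e1 : b = a * (x * z⁻¹) := by rw [← mul_assoc, ← h]; group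
  have e2 : a = b * (x * z⁻¹)⁻¹ := by rw [e1]; group
  have m : x * z⁻¹ ∈ parab cs J := Subgroup.mul_mem _ hx (Subgroup.inv_mem _ hz)
  have l1 := len_add cs ha m
  have l2 := len_add cs hb (Subgroup.inv_mem _ m)
  rw [← e1] at l1
  rw [← e2] at l2
  have : cs.length (x * z⁻¹) = 0 := by omega
  rw [cs.length_eq_zero_iff] at this
  rw [this, mul_one] at e1
  exact ⟨e1, (mul_inv_eq_one.1 this).symm⟩

theorem growth (cs : CoxeterSystem M W) {J : Set B} {a : W} (ha : IsMinRep cs J a)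
    (ω : List B) (hl : cs.length (cs.wordProd ω * a) = ω.length + cs.length a) :
    ∃ b z, IsMinRep cs J b ∧ z ∈ parab cs J ∧ cs.wordProd ω * a = b * z ∧
      cs.length a ≤ cs.length b ∧
      (cs.length b = cs.length a → b = a ∧ ∃ ω2 : List B, (∀ i ∈ ω2, i ∈ J) ∧
        ω2.length = ω.length ∧ z = cs.wordProd ω2 ∧
        ∀ i ∈ ω, ∃ j ∈ ω2, cs.simple i * a = a * cs.simple j) := by
  induction ω with
  | nil =>
    exact ⟨a, 1, ha, Subgroup.one_mem _, by simp, le_rfl,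
      fun _ => ⟨rfl, [], by simp, rfl, by simp, by simp⟩⟩
  | cons i ω ih =>
    rw [cs.wordProd_cons, mul_assoc, List.length_cons] at hl
    have h1 := cs.length_mul_le (cs.simple i) (cs.wordProd ω * a)
    have h2 := cs.length_mul_le (cs.wordProd ω) a
    have h3 := cs.length_wordProd_le ω
    rw [cs.length_simple] at h1
    obtain ⟨b, z, hb, hz, he, hle, himp⟩ := ih (by omega)
    rw [cs.wordProd_cons, mul_assoc, he]
    have hbz := len_add cs hb hz
    rw [← he] at hbz
    rcases deodhar cs hb i with hm | ⟨j, hj, hij⟩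
    · refine ⟨cs.simple i * b, z, hm, hz, by rw [mul_assoc], ?_⟩
      have h4 := len_add cs hm hz
      rw [mul_assoc, ← he] at h4
      refine ⟨by omega, fun h5 => ?_⟩
      omega
    · refine ⟨b, cs.simple j * z, hb, Subgroup.mul_mem _ (simple_mem_parab cs hj) hz,
        by rw [← mul_assoc, hij, mul_assoc], hle, fun hba => ?_⟩
      obtain ⟨rfl, ω2, g1, g2, g3, g4⟩ := himp hba
      refine ⟨rfl, j :: ω2, ?_, by simp [g2], by rw [g3, cs.wordProd_cons], ?_⟩
      · simpa using ⟨hj, g1⟩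
      · intro k hk
        rcases List.mem_cons.1 hk with rfl | hk
        · exact ⟨j, by simp, hij⟩
        · obtain ⟨l, hl, hl2⟩ := g4 k hk
          exact ⟨l, by simp [hl], hl2⟩

end Parabolic

section Orbit

variable {cs J J' δ}

theorem delta_word {f : B → B}
    (hf : ∀ j, ∀ hj : j ∈ J, (δ (sJ cs J j hj) : W) = cs.simple (f j))
    (ω : List B) (hω : ∀ i ∈ ω, i ∈ J) (u : parab cs J) (hu : (u : W) = cs.wordProd ω) :
    (δ u : W) = cs.wordProd (ω.map f) := by
  induction ω generalizing u with
  | nil =>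
    have : u = 1 := by ext; simpa using hu
    simp [this]
  | cons i ω ih =>
    have hi : i ∈ J := hω i (by simp)
    have h1 : u = sJ cs J i hi * ⟨cs.wordProd ω,
        word_mem_parab cs (fun k hk => hω k (by simp [hk]))⟩ := by
      ext; rw [hu, cs.wordProd_cons]; rfl
    rw [h1, map_mul, Subgroup.coe_mul, hf, List.map_cons, cs.wordProd_cons,
      ih (fun k hk => hω k (by simp [hk])) _ rfl]

theorem delta_len {f : B → B}
    (hf : ∀ j, ∀ hj : j ∈ J, (δ (sJ cs J j hj) : W) = cs.simple (f j)) (u : parab cs J) :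
    cs.length (δ u : W) ≤ cs.length (u : W) := by
  obtain ⟨ω, h1, h2, h3⟩ := exists_reduced cs u.2
  rw [delta_word hf ω h1.1 u h2, h3]
  simpa using cs.length_wordProd_le (ω.map f)

theorem mem_orbitOf {x y : W} : y ∈ orbitOf cs J J' δ x ↔
    ∃ u : parab cs J, y = (δ u : W) * x * (u : W)⁻¹ := by
  simp [orbitOf, orbSet]

theorem self_mem_orbitOf (x : W) : x ∈ orbitOf cs J J' δ x :=
  mem_orbitOf.2 ⟨1, by simp⟩

theorem orbit_act {x y : W} (h : y ∈ orbitOf cs J J' δ x) (u : parab cs J) :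
    (δ u : W) * y * (u : W)⁻¹ ∈ orbitOf cs J J' δ x := by
  obtain ⟨u', rfl⟩ := mem_orbitOf.1 h
  refine mem_orbitOf.2 ⟨u * u', ?_⟩
  simp [mul_assoc]

theorem orbit_step {x y : W} (h : y ∈ orbitOf cs J J' δ x) (i : B) (hi : i ∈ J) :
    (δ (sJ cs J i hi) : W) * y * cs.simple i ∈ orbitOf cs J J' δ x := by
  have := orbit_act h (sJ cs J i hi)
  simpa [sJ] using this

theorem toRel_min {w v z : W} (hv : v ∈ orbMin cs J J' δ w) (h : ToRel cs J J' δ v z) :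
    z ∈ orbMin cs J J' δ w := by
  induction h with
  | refl => exact hv
  | tail _ hbc ih =>
    obtain ⟨i, hi, rfl, hl⟩ := hbc
    exact ⟨orbit_step ih.1 i hi, fun z hz => hl.trans (ih.2 z hz)⟩

theorem orbMin_len {w v z : W} (hv : v ∈ orbMin cs J J' δ w) (hz : z ∈ orbMin cs J J' δ w) :
    cs.length z = cs.length v := le_antisymm (hz.2 _ hv.1) (hv.2 _ hz.1)

theorem strip {f : B → B}
    (hf : ∀ j, ∀ hj : j ∈ J, (δ (sJ cs J j hj) : W) = cs.simple (f j))
    {w v a : W} (hv : v ∈ orbMin cs J J' δ w) (q : List B) :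
    ∀ p : List B, (∀ i ∈ p ++ q, i ∈ J) → v = a * cs.wordProd (p ++ q) →
    cs.length v = cs.length a + (p ++ q).length →
    ToRel cs J J' δ v (cs.wordProd (q.map f) * a * cs.wordProd p) := by
  induction q with
  | nil =>
    intro p _ h2 _
    simp only [List.append_nil] at h2
    rw [h2]; simp; exact Relation.ReflTransGen.refl
  | cons i q ih =>
    intro p h1 h2 h3
    have hi : i ∈ J := h1 i (by simp)
    have h := ih (p ++ [i]) (by simpa using h1) (by simpa using h2) (by simpa using h3)
    have hm := toRel_min hv h
    refine h.tail ⟨i, hi, ?_, ?_⟩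
    · rw [hf i hi, List.map_cons, cs.wordProd_cons, cs.wordProd_append, cs.wordProd_singleton]
      simp [mul_assoc]
    · rw [orbMin_len hv hm, h3]
      have l1 := cs.length_mul_le (cs.wordProd ((i :: q).map f) * a) (cs.wordProd p)
      have l2 := cs.length_mul_le (cs.wordProd ((i :: q).map f)) a
      have l3 := cs.length_wordProd_le ((i :: q).map f)
      have l4 := cs.length_wordProd_le p
      simp only [List.length_map, List.length_append] at *
      omega

theorem special_conj {f : B → B}
    (hf : ∀ j, ∀ hj : j ∈ J, (δ (sJ cs J j hj) : W) = cs.simple (f j))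
    {a : W} {K : Set B} (hKJ : K ⊆ J)
    (hK : ∀ k ∈ K, ∃ l ∈ K, cs.simple (f k) * a = a * cs.simple l)
    (u : parab cs J) (hu : (u : W) ∈ parab cs K) :
    ∃ y ∈ parab cs K, (δ u : W) * a = a * y := by
  obtain ⟨ω, h1, h2⟩ := exists_word cs hu
  rw [delta_word hf ω (fun i hi => hKJ (h1 i hi)) u h2]
  clear h2
  induction ω with
  | nil => exact ⟨1, Subgroup.one_mem _, by simp⟩
  | cons i ω ih =>
    obtain ⟨y, hy, he⟩ := ih (fun k hk => h1 k (by simp [hk]))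
    obtain ⟨l, hl, hl2⟩ := hK i (h1 i (by simp))
    refine ⟨cs.simple l * y, Subgroup.mul_mem _ (simple_mem_parab cs hl) hy, ?_⟩
    rw [List.map_cons, cs.wordProd_cons, mul_assoc, he, ← mul_assoc, hl2, mul_assoc]

theorem uniq {f : B → B}
    (hf : ∀ j, ∀ hj : j ∈ J, (δ (sJ cs J j hj) : W) = cs.simple (f j))
    {a w x : W} (ha : IsMinRep cs J a) (hw : IsMinRep cs J w) {K : Set B} (hKJ : K ⊆ J)
    (hK : ∀ k ∈ K, ∃ l ∈ K, cs.simple (f k) * a = a * cs.simple l)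
    (hx : x ∈ parab cs K) (h : a * x ∈ orbitOf cs J J' δ w) : a = w := by
  obtain ⟨u, hu⟩ := mem_orbitOf.1 h
  obtain ⟨b, y, hb, hy, hby⟩ := exists_decomp cs K (u : W)⁻¹
  have hyJ : y ∈ parab cs J := parab_mono cs hKJ hy
  -- `u = y⁻¹ b⁻¹`
  obtain ⟨y', rfl⟩ : ∃ y' : parab cs J, (y' : W) = y := ⟨⟨y, hyJ⟩, rfl⟩
  have hub : (y' * u : W) = b⁻¹ := by
    have : b = (u : W)⁻¹ * (y' : W)⁻¹ := by rw [hby]; group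
    rw [this]; group
  obtain ⟨z, hz, hz2⟩ := special_conj hf hKJ hK y' hy
  set u' : parab cs J := y' * u with hu'
  have hu'b : (u' : W) = b⁻¹ := by rw [hu']; exact hub
  set x' : W := z * x * (y' : W)⁻¹ with hx'
  have hx'K : x' ∈ parab cs K :=
    Subgroup.mul_mem _ (Subgroup.mul_mem _ hz hx) (Subgroup.inv_mem _ hy)
  have main : (δ u' : W) * w * (u' : W)⁻¹ = a * x' := by
    have e1 : (δ u' : W) * w * (u' : W)⁻¹ = (δ y' : W) * (a * x) * (y' : W)⁻¹ := by
      rw [hu, hu']; simp [mul_assoc]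
    rw [e1, hx', ← mul_assoc, hz2]; simp only [mul_assoc]
  have main2 : (δ u' : W) * w = a * (x' * u') := by
    rw [← mul_assoc, ← main]; group
  have l1 : cs.length (x' * (u' : W)) = cs.length x' + cs.length (u' : W) := by
    rw [← cs.length_inv, mul_inv_rev, hu'b, inv_inv, len_add cs hb (Subgroup.inv_mem _ hx'K),
      cs.length_inv, cs.length_inv]
    omega
  have hx'u : x' * (u' : W) ∈ parab cs J := Subgroup.mul_mem _ (parab_mono cs hKJ hx'K) u'.2
  have l2 := len_add cs ha hx'u
  have l3 := len_add cs hw (Subgroup.inv_mem _ u'.2)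
  rw [cs.length_inv] at l3
  have l4 : cs.length (w * (u' : W)⁻¹) ≤
      cs.length (u' : W) + (cs.length a + cs.length x') := by
    have e : w * (u' : W)⁻¹ = (δ u' : W)⁻¹ * (a * x') := by rw [← main]; group
    rw [e]
    have g1 := cs.length_mul_le (δ u' : W)⁻¹ (a * x')
    have g2 := cs.length_mul_le a x'
    have g3 := delta_len hf u'
    rw [cs.length_inv] at g1
    omega
  obtain ⟨μ, m1, m2, m3⟩ := exists_reduced cs u'.2
  have m4 := delta_word hf μ m1.1 u' m2
  have l5 := cs.length_mul_le (δ u' : W) w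
  have l6 := delta_len hf u'
  rw [main2] at l5
  obtain ⟨c, d, hc, hd, hcd, hle, himp⟩ := growth cs hw (μ.map f) (by
    rw [← m4, main2, List.length_map]; omega)
  rw [← m4, main2] at hcd
  obtain ⟨rfl, rfl⟩ := decomp_unique cs hc ha hd hx'u hcd
  exact (himp (by omega)).1

theorem toRel_rep {f : B → B}
    (hf : ∀ j, ∀ hj : j ∈ J, (δ (sJ cs J j hj) : W) = cs.simple (f j))
    {w v : W} (hw : IsMinRep cs J w) (hv : v ∈ orbMin cs J J' δ w) : ToRel cs J J' δ v w := by
  classical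
  -- choose `a` of maximal length
  let P : ℕ → Prop := fun n => ∃ a x, IsMinRep cs J a ∧ x ∈ parab cs J ∧
    ToRel cs J J' δ v (a * x) ∧ cs.length a = n
  have hPb : ∀ n, P n → n ≤ cs.length v := by
    rintro n ⟨a, x, ha, hx, hr, rfl⟩
    rw [← orbMin_len hv (toRel_min hv hr), len_add cs ha hx]; omega
  have hP0 : ∃ n, P n := by
    obtain ⟨a, x, ha, hx, h⟩ := exists_decomp cs J v
    exact ⟨_, a, x, ha, hx, by rw [← h]; exact Relation.ReflTransGen.refl, rfl⟩
  obtain ⟨n0, hn0⟩ := hP0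
  obtain ⟨a, x, ha, hx, hr, hn⟩ : P (Nat.findGreatest P (cs.length v)) :=
    Nat.findGreatest_spec (hPb n0 hn0) hn0
  have hmax : ∀ b z, IsMinRep cs J b → z ∈ parab cs J → ToRel cs J J' δ v (b * z) →
      cs.length b ≤ cs.length a := by
    intro b z hb hz hbz
    have hp : P (cs.length b) := ⟨b, z, hb, hz, hbz, rfl⟩
    rw [hn]
    exact Nat.le_findGreatest (hPb _ hp) hp
  let X : List B → Prop := fun ω => (∀ i ∈ ω, i ∈ J) ∧ ToRel cs J J' δ v (a * cs.wordProd ω) ∧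
    cs.length v = cs.length a + ω.length
  let K : Set B := {k | ∃ ω, X ω ∧ k ∈ ω}
  have hKJ : K ⊆ J := by
    rintro k ⟨ω, hω, hk⟩; exact hω.1 k hk
  have hK : ∀ k ∈ K, ∃ l ∈ K, cs.simple (f k) * a = a * cs.simple l := by
    rintro k ⟨ω, ⟨h1, h2, h3⟩, hk⟩
    have hm := toRel_min hv h2
    have hs := strip (a := a) hf hm ω [] (by simpa using h1) (by simp)
      (by rw [orbMin_len hv hm]; simpa using h3)
    simp only [cs.wordProd_nil, mul_one] at hs
    have hs2 := h2.trans hs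
    have hm2 := orbMin_len hv (toRel_min hv hs2)
    obtain ⟨b, z, hb, hz, he, hle, himp⟩ := growth cs ha (ω.map f) (by
      rw [hm2, List.length_map]; omega)
    rw [he] at hs2
    obtain ⟨rfl, ω2, g1, g2, g3, g4⟩ := himp (le_antisymm (hmax b z hb hz hs2) hle)
    obtain ⟨l, hl, hl2⟩ := g4 (f k) (List.mem_map_of_mem hk)
    refine ⟨l, ⟨ω2, ⟨g1, by rw [← g3]; exact hs2, ?_⟩, hl⟩, hl2⟩
    rw [g2, List.length_map, h3]
  obtain ⟨ω, h1, rfl, h3⟩ := exists_reduced cs hx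
  have hm := toRel_min hv hr
  have hX : X ω := ⟨h1.1, hr, by rw [← orbMin_len hv hm, len_add cs ha hx, h3]⟩
  have hxK : cs.wordProd ω ∈ parab cs K := word_mem_parab cs (fun i hi => ⟨ω, hX, hi⟩)
  obtain rfl := uniq hf ha hw hKJ hK hxK hm.1
  have h4 := hm.2 _ (self_mem_orbitOf a)
  rw [len_add cs ha hx] at h4
  have h5 : cs.length (cs.wordProd ω) = 0 := by omega
  rw [cs.length_eq_zero_iff] at h5
  rwa [h5, mul_one] at hr

theorem transport {f : B → B}
    (hf : ∀ j, ∀ hj : j ∈ J, (δ (sJ cs J j hj) : W) = cs.simple (f j))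
    {w z : W} {i : B} (hi : i ∈ J)
    (hl : cs.length (cs.simple (f i) * z * cs.simple i) = cs.length z)
    (h : ∃ v ∈ orbMin cs J J' δ w, bruhatLE cs v z) :
    ∃ v ∈ orbMin cs J J' δ w, bruhatLE cs v (cs.simple (f i) * z * cs.simple i) := by
  obtain ⟨v, hv, hvz⟩ := h
  have horb := orbit_step hv.1 i hi
  rw [hf i hi] at horb
  have hmin := hv.2 _ horb
  have c1 := cs.length_mul_simple z i
  have c2 := cs.length_simple_mul z (f i)
  have c3 := cs.length_mul_simple v i
  have c4 := cs.length_simple_mul v (f i)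
  have c5 := cs.length_mul_simple (cs.simple (f i) * v) i
  have c6 := cs.length_simple_mul (v * cs.simple i) (f i)
  by_cases hz1 : cs.length (z * cs.simple i) < cs.length z
  · have L := lift_right cs i hvz hz1
    rw [mul_assoc] at hl ⊢
    by_cases hv1 : cs.length (v * cs.simple i) < cs.length v
    · rw [mul_assoc] at horb hmin
      refine ⟨_, ⟨horb, fun y hy => ?_⟩, lift_left_up cs (f i) (L.1 hv1) (by omega) (by omega)⟩
      have := hv.2 y hy
      omega
    · exact ⟨v, hv, (L.2 hv1).trans (bruhat_simple_mul cs _ _ (by omega))⟩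
  · by_cases hz2 : cs.length (cs.simple (f i) * z) < cs.length z
    · have L := lift_left cs (f i) hvz hz2
      by_cases hv1 : cs.length (cs.simple (f i) * v) < cs.length v
      · refine ⟨_, ⟨horb, fun y hy => ?_⟩, lift_right_up cs i (L.1 hv1) (by omega) (by omega)⟩
        have := hv.2 y hy
        omega
      · exact ⟨v, hv, (L.2 hv1).trans (bruhat_mul_simple cs _ _ (by omega))⟩
    · have e := simple_mul_eq cs z (f i) i (by omega)
      refine ⟨v, hv, ?_⟩
      rw [e]; simpa using hvz

theorem transport_rel {f : B → B}
    (hf : ∀ j, ∀ hj : j ∈ J, (δ (sJ cs J j hj) : W) = cs.simple (f j))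
    {w w' z z' : W} (hz : z ∈ orbMin cs J J' δ w') (hr : ToRel cs J J' δ z z') :
    (∃ v ∈ orbMin cs J J' δ w, bruhatLE cs v z) ↔
    (∃ v ∈ orbMin cs J J' δ w, bruhatLE cs v z') := by
  induction hr with
  | refl => rfl
  | @tail b c hzb hbc ih =>
    rw [ih]
    have hb := toRel_min hz hzb
    have hc := toRel_min hz (hzb.tail hbc)
    have hl := orbMin_len hb hc
    obtain ⟨i, hi, rfl, -⟩ := hbc
    rw [hf i hi] at hl ⊢
    refine ⟨transport hf hi hl, fun h => ?_⟩
    have e : cs.simple (f i) * (cs.simple (f i) * b * cs.simple i) * cs.simple i = b := by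
      simp [← mul_assoc]
    have := transport hf hi (z := cs.simple (f i) * b * cs.simple i) (by rw [e, hl]) h
    rwa [e] at this

end Orbit

/-- For `w, w' ∈ W^J`: if some `v' ∈ (W_J ·_δ w')_min`
dominates some `v ∈ (W_J ·_δ w)_min` in the Bruhat order, then every
`v' ∈ (W_J ·_δ w')_min` dominates some `v ∈ (W_J ·_δ w)_min`. -/
theorem stmt9 (hδ : MapsSimples cs J J' δ) (w w' : W)
    (hw : IsMinRep cs J w) (hw' : IsMinRep cs J w')
    (h : ∃ v' ∈ orbMin cs J J' δ w', ∃ v ∈ orbMin cs J J' δ w,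
      bruhatLE cs v v') :
    ∀ v' ∈ orbMin cs J J' δ w', ∃ v ∈ orbMin cs J J' δ w,
      bruhatLE cs v v' := by
  classical
  choose! g hg using hδ.1
  have hf : ∀ j, ∀ hj : j ∈ J, (δ (sJ cs J j hj) : W) = cs.simple (g j) :=
    fun j hj => (hg j hj).2
  obtain ⟨v0, hv0, hQ⟩ := h
  intro v' hv'
  rw [transport_rel hf hv' (toRel_rep hf hw' hv')]
  rw [transport_rel hf hv0 (toRel_rep hf hw' hv0)] at hQ
  exact hQ

end PartialConjugation
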